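/- Let (W,S) be a Coxeter system. Any expression (word in S*) for an element w of W can be transformed into a reduced expression for w by a sequence of nil moves (deletion of a factor ss for s in S) and braid moves (replacement of an alternating factor stst... of length m(s,t) by tsts... of length m(s,t)). -/

import Mathlib

/-- A single nil move (deletion of a factor `ss`) or braid move (replacement of an
alternating factor `stst⋯` of length `m(s,t)` by `tsts⋯` of length `m(s,t)`) applied to a
word in the generators of a Coxeter system. -/
def NilBraidMove {B : Type*} (M : CoxeterMatrix B) (ω ω' : List B) : Prop :=
  (∃ (l₁ l₂ : List B) (s : B), ω = l₁ ++ [s, s] ++ l₂ ∧ ω' = l₁ ++ l₂) ∨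
  (∃ (l₁ l₂ : List B) (s t : B), M s t ≠ 0 ∧
    ω = l₁ ++ CoxeterSystem.alternatingWord s t (M s t) ++ l₂ ∧
    ω' = l₁ ++ CoxeterSystem.alternatingWord t s (M s t) ++ l₂)

/-!
The geometric representation shows that `sᵢ * sⱼ` has order exactly `M i j`, so the reflections
attached to the letters of `sᵢsⱼsᵢ⋯` are pairwise distinct as long as this word is not longer than
`M i j`. Letting the generators act on signed reflections shows that the parity of the number of
times a reflection occurs among those of a word depends only on the product of the word; this gives
the exchange property. If `sᵢ` and `sⱼ` are both right descents of `w`, then repeated exchange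
shows that `M i j` is finite and that `w` has reduced words ending in each of the two alternating
words of length `M i j`. These differ by one braid move, so by induction on the length any two
reduced words of `w` are connected by braid moves. Now scan a word from the left: as soon as a
letter `s` makes a reduced prefix non-reduced, braid moves on that prefix bring `s` to its end, and
a nil move removes `ss`.
-/

namespace Tits

section Reflections

open Module Polynomial.Chebyshev
open Real (cos sin)
open scoped Real

section CommRing

variable {R V : Type*} [CommRing R] [AddCommGroup V] [Module R V] {x y : V} {f g : Dual R V}

theorem linearIndependent_pair_of_mul_ne_four [NoZeroDivisors R] (hf : f x = 2) (hg : g y = 2)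
    (h : f y * g x ≠ 4) : LinearIndependent R ![x, y] := by
  rw [LinearIndependent.pair_iff]
  intro a b hab
  have hfab : a * 2 + b * f y = 0 := by simpa [hf] using congrArg f hab
  have hgab : a * g x + b * 2 = 0 := by simpa [hg] using congrArg g hab
  have ha : a * (f y * g x - 4) = 0 := by linear_combination f y * hgab - 2 * hfab
  have hb : b * (f y * g x - 4) = 0 := by linear_combination g x * hfab - 2 * hgab
  exact ⟨(mul_eq_zero.mp ha).resolve_right (sub_ne_zero.mpr h),
    (mul_eq_zero.mp hb).resolve_right (sub_ne_zero.mpr h)⟩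

theorem reflection_mul_self (hf : f x = 2) : reflection hf * reflection hf = 1 :=
  LinearEquiv.ext (involutive_reflection hf)

theorem orderOf_reflection_mul_reflection_eq_two [CharZero R] (hf : f x = 2) (hg : g y = 2)
    (hfy : f y = 0) (hgx : g x = 0) : orderOf (reflection hf * reflection hg) = 2 := by
  refine orderOf_eq_prime (LinearEquiv.ext fun z ↦ ?_) fun h ↦ ?_
  · simp only [pow_two, LinearEquiv.mul_apply, reflection_apply, map_sub, map_smul, hf, hg, hfy,
      hgx, LinearEquiv.coe_one, id_eq]
    module
  · have hx : -x = x := by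
      simpa [reflection_apply, hgx, hf, two_smul] using DFunLike.congr_fun h x
    have := congrArg f hx
    rw [map_neg, hf, neg_eq_iff_add_eq_zero] at this
    norm_num at this

theorem orderOf_reflection_mul_reflection_eq_zero [IsAddTorsionFree V] (hf : f x = 2)
    (hg : g y = 2) (h : f y * g x = 4) (hxy : f y • x ≠ (2 : R) • y) :
    orderOf (reflection hf * reflection hg) = 0 := by
  refine orderOf_eq_zero_iff'.mpr fun k hk hpow ↦ ?_
  have hiter : y + k • (f y • x - (2 : R) • y) = y := by
    rw [← reflection_reflection_iterate hf hg h, ← LinearEquiv.mul_eq_trans, ← LinearEquiv.coe_pow,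
      hpow, LinearEquiv.coe_one, id_eq]
  rw [add_eq_left, smul_eq_zero_iff_right hk.ne', sub_eq_zero] at hiter
  exact hxy hiter

end CommRing

variable {V : Type*} [AddCommGroup V] [Module ℝ V] {x y : V} {f g : Dual ℝ V}

theorem S_sub_one_two_mul_cos (θ : ℝ) (n : ℤ) :
    (S ℝ (n - 1)).eval (2 * cos θ) * sin θ = sin (n * θ) := by
  simp [S_two_mul_real_cos]

theorem reflection_mul_reflection_pow_eq_one {θ : ℝ} (hθ : sin θ ≠ 0) (hf : f x = 2)
    (hg : g y = 2) (h : 2 * cos θ = f y * g x - 2) {k : ℕ} (hk : cos (k * θ) = 1) :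
    (reflection hf * reflection hg) ^ k = 1 := by
  obtain ⟨n, hn⟩ := (Real.cos_eq_one_iff _).mp hk
  ext z
  rw [reflection_mul_reflection_pow_apply hf hg k z _ h, LinearEquiv.coe_one, id_eq]
  obtain ⟨l, rfl | rfl⟩ := Nat.even_or_odd' k
  · have hS : (S ℝ (l - 1)).eval (2 * cos θ) = 0 := by
      have hl : l * θ = n * π := by push_cast at hn; linarith
      refine (mul_eq_zero.mp (?_ : _ * sin θ = 0)).resolve_right hθ
      rw [S_sub_one_two_mul_cos, Int.cast_natCast, hl, Real.sin_int_mul_pi]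
    rw [show ((2 * l : ℕ) - 2 : ℤ) / 2 = l - 1 by lia,
      show ((2 * l : ℕ) - 1 : ℤ) / 2 = l - 1 by lia, hS]
    module
  · have hS : (S ℝ l).eval (2 * cos θ) + (S ℝ (l - 1)).eval (2 * cos θ) = 0 := by
      have hl : (l + 1) * θ = n * (2 * π) - l * θ := by push_cast at hn; linarith
      refine (mul_eq_zero.mp (?_ : _ * sin θ = 0)).resolve_right hθ
      rw [add_mul, S_two_mul_real_cos, S_sub_one_two_mul_cos, Int.cast_natCast, hl,
        Real.sin_int_mul_two_pi_sub, neg_add_cancel]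
    rw [show ((2 * l + 1 : ℕ) - 2 : ℤ) / 2 = l - 1 by lia,
      show ((2 * l + 1 : ℕ) - 1 : ℤ) / 2 = l by lia,
      show ((2 * l + 1 : ℕ) - 3 : ℤ) / 2 = l - 1 by lia,
      show ((2 * l + 1 : ℕ) : ℤ) / 2 = l by lia, hS]
    module

theorem cos_mul_eq_one_of_reflection_mul_reflection_pow_eq_one {θ : ℝ} (hθ : sin θ ≠ 0)
    (hf : f x = 2) (hg : g y = 2) (h : 2 * cos θ = f y * g x - 2) {k : ℕ}
    (hk : (reflection hf * reflection hg) ^ k = 1) : cos (k * θ) = 1 := by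
  obtain ⟨hcos, hcos'⟩ : cos θ ≠ 1 ∧ cos θ ≠ -1 := by
    rwa [Ne, Real.sin_eq_zero_iff_cos_eq, not_or] at hθ
  have hgx : -g x ≠ 0 := fun h0 ↦ hcos' (by rw [neg_eq_zero.mp h0] at h; linarith)
  have hind := linearIndependent_pair_of_mul_ne_four hf hg fun h4 ↦ hcos (by linarith)
  have hx := reflection_mul_reflection_pow_apply_self hf hg k _ h
  rw [hk, LinearEquiv.coe_one, id_eq] at hx
  obtain ⟨hSx, hSy⟩ := hind.eq_of_pair
    ((by simp : (1 : ℝ) • x + (0 : ℝ) • y = x).trans hx)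
  have hS : (S ℝ (k - 1)).eval (2 * cos θ) = 0 :=
    (mul_eq_zero.mp hSy.symm).resolve_right hgx
  have hsin : sin (k * θ) = 0 := by simpa [hS] using (S_sub_one_two_mul_cos θ k).symm
  have hsin' : sin ((k + 1) * θ) = sin θ := by
    rw [hS, add_zero] at hSx
    rw [← Int.cast_natCast, ← S_two_mul_real_cos, ← hSx, one_mul]
  rw [add_mul, one_mul, Real.sin_add, hsin, zero_mul, zero_add] at hsin'
  exact mul_right_cancel₀ hθ (hsin'.trans (one_mul _).symm)

theorem cos_natCast_mul_two_pi_div_eq_one_iff {m : ℕ} (hm : m ≠ 0) (k : ℕ) :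
    cos (k * (2 * π / m)) = 1 ↔ m ∣ k := by
  rw [Real.cos_eq_one_iff, ← Int.natCast_dvd_natCast, dvd_iff_exists_eq_mul_left]
  refine exists_congr fun n ↦ ?_
  rw [← Int.cast_inj (α := ℝ)]
  push_cast
  field_simp
  exact eq_comm

theorem orderOf_reflection_mul_reflection {m : ℕ} (hm : 3 ≤ m) (hf : f x = 2) (hg : g y = 2)
    (h : f y * g x = 4 * cos (π / m) ^ 2) : orderOf (reflection hf * reflection hg) = m := by
  have hsin : sin (2 * π / m) ≠ 0 := by
    refine (Real.sin_pos_of_pos_of_lt_pi (by positivity) ?_).ne'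
    have : (3 : ℝ) ≤ m := mod_cast hm
    rw [div_lt_iff₀ (by positivity)]
    nlinarith [Real.pi_pos]
  have hcos : 2 * cos (2 * π / m) = f y * g x - 2 := by
    rw [h, mul_div_assoc, Real.cos_two_mul]
    ring
  refine Nat.dvd_right_iff_eq.mp fun k ↦ ?_
  rw [orderOf_dvd_iff_pow_eq_one, ← cos_natCast_mul_two_pi_div_eq_one_iff (by lia) k]
  exact ⟨cos_mul_eq_one_of_reflection_mul_reflection_pow_eq_one hsin hf hg hcos,
    reflection_mul_reflection_pow_eq_one hsin hf hg hcos⟩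

end Reflections

section GeometricRepresentation

open Module

variable {B : Type*} (M : CoxeterMatrix B)

/-- The linear form `2⟨αᵢ, ·⟩` on the space with basis the simple roots `αⱼ`, for the symmetric
bilinear form `⟨αᵢ, αⱼ⟩ = -cos (π / M i j)`. Lean's `π / 0 = 0` gives the usual value
`⟨αᵢ, αⱼ⟩ = -1` where `M i j = 0` encodes `m(i, j) = ∞`. -/
noncomputable def simpleCoroot (i : B) : Dual ℝ (B →₀ ℝ) :=
  Finsupp.linearCombination ℝ fun j ↦ -2 * Real.cos (Real.pi / M i j)

theorem simpleCoroot_single (i j : B) :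
    simpleCoroot M i (Finsupp.single j 1) = -2 * Real.cos (Real.pi / M i j) := by
  simp [simpleCoroot]

theorem simpleCoroot_single_self (i : B) : simpleCoroot M i (Finsupp.single i 1) = 2 := by
  simp [simpleCoroot_single]

/-- The image of a simple generator under the geometric representation: the reflection in the
simple root `αᵢ`. -/
noncomputable def geometricReflection (i : B) : (B →₀ ℝ) ≃ₗ[ℝ] (B →₀ ℝ) :=
  reflection (simpleCoroot_single_self M i)

theorem orderOf_geometricReflection_mul (i j : B) :
    orderOf (geometricReflection M i * geometricReflection M j) = M i j := by
  obtain rfl | hij := eq_or_ne i j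
  · rw [geometricReflection, reflection_mul_self, orderOf_one, M.diagonal]
  have hi := simpleCoroot_single M i j
  have hj := simpleCoroot_single M j i
  rw [M.symmetric j i] at hj
  have hM := M.off_diagonal i j hij
  obtain h0 | h2 | h3 : M i j = 0 ∨ M i j = 2 ∨ 3 ≤ M i j := by lia
  · simp only [h0, Nat.cast_zero, div_zero, Real.cos_zero, mul_one] at hi hj
    rw [h0]
    refine orderOf_reflection_mul_reflection_eq_zero _ _ (by norm_num [hi, hj]) fun h ↦ ?_
    simpa [hi, hij] using DFunLike.congr_fun h i
  · simp only [h2, Nat.cast_ofNat, Real.cos_pi_div_two, mul_zero] at hi hj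
    rw [h2]
    exact orderOf_reflection_mul_reflection_eq_two _ _ hi hj
  · exact orderOf_reflection_mul_reflection h3 _ _ (by rw [hi, hj]; ring)

theorem isLiftable_geometricReflection : M.IsLiftable (geometricReflection M) := fun i j ↦ by
  rw [← orderOf_geometricReflection_mul, pow_orderOf_eq_one]

variable {M} in
theorem orderOf_simple_mul_simple {W : Type*} [Group W] (cs : CoxeterSystem M W) (i j : B) :
    orderOf (cs.simple i * cs.simple j) = M i j := by
  refine Nat.dvd_antisymm (orderOf_dvd_of_pow_eq_one (cs.simple_mul_simple_pow i j)) ?_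
  simpa [orderOf_geometricReflection_mul] using
    orderOf_map_dvd (cs.lift ⟨_, isLiftable_geometricReflection M⟩) (cs.simple i * cs.simple j)

end GeometricRepresentation

section Exchange

open CoxeterSystem

variable {B W : Type*} [Group W] {M : CoxeterMatrix B} (cs : CoxeterSystem M W)

theorem rightInvSeq_alternatingWord (i j : B) (n : ℕ) :
    cs.rightInvSeq (alternatingWord i j n) =
      ((List.range n).map fun k ↦ cs.simple j * (cs.simple i * cs.simple j) ^ k).reverse := by
  induction n generalizing i j with
  | zero => simp [alternatingWord]
  | succ n ih =>
    have hconj (k : ℕ) :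
        MulAut.conj (cs.simple j) (cs.simple i * (cs.simple j * cs.simple i) ^ k) =
          cs.simple j * (cs.simple i * cs.simple j) ^ (k + 1) := by
      rw [MulAut.conj_apply, inv_simple, ← mul_pow_mul, pow_succ]
      simp only [mul_assoc]
    rw [alternatingWord_succ, rightInvSeq_concat, ih, List.range_succ_eq_map]
    simp [List.map_reverse, Function.comp_def, hconj]

theorem simple_notMem_rightInvSeq_alternatingWord {i j : B} {n : ℕ}
    (hn : M i j = 0 ∨ n < M i j) : cs.simple i ∉ cs.rightInvSeq (alternatingWord i j n) := by
  intro hmem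
  simp only [rightInvSeq_alternatingWord, List.mem_reverse, List.mem_map, List.mem_range] at hmem
  obtain ⟨k, hkn, hk⟩ := hmem
  have hpow : (cs.simple i * cs.simple j) ^ (k + 1) = 1 := by
    rw [pow_succ', mul_assoc, hk, simple_mul_simple_self]
  have hdvd := orderOf_simple_mul_simple cs i j ▸ orderOf_dvd_of_pow_eq_one hpow
  obtain h0 | hlt := hn
  · simp [h0] at hdvd
  · have := Nat.le_of_dvd k.succ_pos hdvd
    lia

open Classical in
/-- The action of a simple generator on signed reflections `(t, ε)`: it conjugates `t`, and changes
the sign exactly when `t` is that generator. The signs are written additively, and `t` ranges over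
all of `W` to avoid a subtype. -/
noncomputable def signedConj (i : B) : Function.End (W × ZMod 2) := fun p ↦
  (MulAut.conj (cs.simple i) p.1, p.2 + if p.1 = cs.simple i then 1 else 0)

open Classical in
theorem prod_map_signedConj_apply (ω : List B) (t : W) (ε : ZMod 2) :
    (ω.map (signedConj cs)).prod (t, ε) =
      (MulAut.conj (cs.wordProd ω) t, ε + (cs.rightInvSeq ω).count t) := by
  induction ω with
  | nil => simp [Function.End.one_def]
  | cons i ω ih =>
    have hflip : MulAut.conj (cs.wordProd ω) t = cs.simple i ↔
        (cs.wordProd ω)⁻¹ * cs.simple i * cs.wordProd ω = t := by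
      rw [← MulEquiv.eq_symm_apply, MulAut.conj_symm_apply, eq_comm]
    change signedConj cs i ((ω.map (signedConj cs)).prod (t, ε)) = _
    rw [ih, signedConj]
    simp only [rightInvSeq, wordProd_cons, List.count_cons, beq_iff_eq, hflip, map_mul,
      MulAut.mul_apply, Nat.cast_add, Nat.cast_ite, Nat.cast_one, Nat.cast_zero, add_assoc]

theorem isLiftable_signedConj : M.IsLiftable (signedConj cs) := by
  classical
  intro i j
  have hpow (m : ℕ) : (signedConj cs i * signedConj cs j) ^ m =
      ((alternatingWord i j (2 * m)).map (signedConj cs)).prod := by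
    induction m with
    | zero => simp [alternatingWord]
    | succ m ih => simp [pow_succ, ih, mul_add, alternatingWord_succ]
  have hperiod : (fun k ↦ cs.simple j * (cs.simple i * cs.simple j) ^ k) ∘ (M i j + ·) =
      fun k ↦ cs.simple j * (cs.simple i * cs.simple j) ^ k := by
    ext k
    simp [pow_add]
  funext ⟨t, ε⟩
  rw [hpow, prod_map_signedConj_apply, rightInvSeq_alternatingWord, two_mul, List.range_add,
    List.map_append, List.map_map, hperiod, List.count_reverse, List.count_append, Nat.cast_add,
    CharTwo.add_self_eq_zero (R := ZMod 2), prod_alternatingWord_eq_mul_pow]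
  simp [← two_mul, Function.End.one_def]

open Classical in
theorem natCast_count_rightInvSeq_eq_of_wordProd_eq {ω ω' : List B}
    (h : cs.wordProd ω = cs.wordProd ω') (t : W) :
    ((cs.rightInvSeq ω).count t : ZMod 2) = (cs.rightInvSeq ω').count t := by
  have hlift (ω : List B) : cs.lift ⟨_, isLiftable_signedConj cs⟩ (cs.wordProd ω) =
      (ω.map (signedConj cs)).prod := by
    simp [wordProd, map_list_prod, Function.comp_def]
  have hprod : (ω.map (signedConj cs)).prod (t, 0) = (ω'.map (signedConj cs)).prod (t, 0) := by
    rw [← hlift, ← hlift, h]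
  simpa [prod_map_signedConj_apply, h] using hprod

theorem isReduced_of_isReduced_append_left {ω ω' : List B} (h : cs.IsReduced (ω ++ ω')) :
    cs.IsReduced ω := by
  simpa using h.take ω.length

theorem exists_isReduced_append_singleton {w : W} {i : B} (h : cs.IsRightDescent w i) :
    ∃ ω, cs.IsReduced (ω ++ [i]) ∧ cs.wordProd (ω ++ [i]) = w := by
  obtain ⟨ω, hω, hw⟩ := cs.exists_isReduced (w * cs.simple i)
  have hprod : cs.wordProd (ω ++ [i]) = w := by simp [wordProd_append, ← hw]
  refine ⟨ω, ?_, hprod⟩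
  rw [CoxeterSystem.IsReduced, hprod, List.length_append, List.length_singleton, ← hω.eq, ← hw]
  exact (cs.isRightDescent_iff.mp h).symm

theorem isRightDescent_of_isReduced_append_singleton {ω : List B} {i : B}
    (h : cs.IsReduced (ω ++ [i])) :
    cs.IsRightDescent (cs.wordProd (ω ++ [i])) i := by
  rw [IsRightDescent, h.eq, wordProd_append, wordProd_singleton, simple_mul_simple_cancel_right,
    List.length_append, List.length_singleton]
  exact Nat.lt_succ_of_le (cs.length_wordProd_le ω)

theorem simple_mem_rightInvSeq_of_isRightDescent {ω : List B} {i : B}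
    (h : cs.IsRightDescent (cs.wordProd ω) i) :
    cs.simple i ∈ cs.rightInvSeq ω := by
  classical
  obtain ⟨ρ, hρ, hprod⟩ := exists_isReduced_append_singleton cs h
  have hmem : cs.simple i ∈ cs.rightInvSeq (ρ ++ [i]) := by
    rw [← List.concat_eq_append, rightInvSeq_concat]
    simp
  have hcount := natCast_count_rightInvSeq_eq_of_wordProd_eq cs hprod (cs.simple i)
  rw [List.count_eq_one_of_mem hρ.nodup_rightInvSeq hmem] at hcount
  by_contra hnotMem
  simp [List.count_eq_zero_of_not_mem hnotMem] at hcount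

theorem exists_wordProd_append_mul_simple {ω ω' : List B} {i : B}
    (h : cs.IsRightDescent (cs.wordProd (ω ++ ω')) i) (hi : cs.simple i ∉ cs.rightInvSeq ω') :
    ∃ ρ, ρ.length + 1 = ω.length ∧
      cs.wordProd (ω ++ ω') * cs.simple i = cs.wordProd (ρ ++ ω') := by
  obtain ⟨k, hk, hki⟩ := List.mem_iff_getElem.mp (simple_mem_rightInvSeq_of_isRightDescent cs h)
  have hkω : k < ω.length := by
    by_contra! hle
    have hdrop : (cs.rightInvSeq (ω ++ ω')).drop ω.length = cs.rightInvSeq ω' := by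
      rw [← rightInvSeq_drop, List.drop_left]
    refine hi (hdrop ▸ List.mem_drop_iff_getElem.mpr ⟨k - ω.length, by lia, ?_⟩)
    simpa [Nat.add_sub_cancel' hle] using hki
  refine ⟨ω.eraseIdx k, List.length_eraseIdx_add_one hkω, ?_⟩
  rw [← List.eraseIdx_append_of_lt_length hkω, ← wordProd_mul_getD_rightInvSeq,
    List.getD_eq_getElem _ 1 hk, hki]

theorem exists_isReduced_append_alternatingWord {w : W} {i j : B} (hi : cs.IsRightDescent w i)
    (hj : cs.IsRightDescent w j) {n : ℕ} (hn : M i j = 0 ∨ n ≤ M i j) :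
    ∃ ω, cs.IsReduced (ω ++ alternatingWord i j n) ∧
      cs.wordProd (ω ++ alternatingWord i j n) = w := by
  induction n generalizing i j with
  | zero =>
    obtain ⟨ω, hω, rfl⟩ := cs.exists_isReduced w
    exact ⟨ω, by simpa [alternatingWord] using hω, by simp [alternatingWord]⟩
  | succ n ih =>
    obtain ⟨ω, hω, rfl⟩ := ih hj hi (by rw [M.symmetric]; lia)
    obtain ⟨ρ, hlen, hρ⟩ := exists_wordProd_append_mul_simple cs hj
      (simple_notMem_rightInvSeq_alternatingWord cs (by rw [M.symmetric]; lia))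
    have hprod : cs.wordProd (ρ ++ alternatingWord i j (n + 1)) =
        cs.wordProd (ω ++ alternatingWord j i n) := by
      rw [alternatingWord_succ, List.concat_eq_append, ← List.append_assoc, wordProd_append, ← hρ,
        wordProd_singleton, simple_mul_simple_cancel_right]
    refine ⟨ρ, ?_, hprod⟩
    rw [CoxeterSystem.IsReduced, hprod, hω.eq]
    simp only [List.length_append, length_alternatingWord]
    lia

theorem coxeterMatrix_ne_zero_of_isRightDescent {w : W} {i j : B} (hi : cs.IsRightDescent w i)
    (hj : cs.IsRightDescent w j) : M i j ≠ 0 := by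
  intro h0
  obtain ⟨ω, hω, hprod⟩ :=
    exists_isReduced_append_alternatingWord cs hi hj (n := cs.length w + 1) (.inl h0)
  have hlen := hω.eq
  rw [hprod, List.length_append, length_alternatingWord] at hlen
  lia

end Exchange

section Moves

open CoxeterSystem Relation

variable {B : Type*} {M : CoxeterMatrix B}

/-- A single braid move: the second kind of move in `NilBraidMove`. -/
def BraidMove (M : CoxeterMatrix B) (ω ω' : List B) : Prop :=
  ∃ (l₁ l₂ : List B) (s t : B), M s t ≠ 0 ∧
    ω = l₁ ++ alternatingWord s t (M s t) ++ l₂ ∧ ω' = l₁ ++ alternatingWord t s (M s t) ++ l₂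

theorem BraidMove.append_right {ω ω' : List B} (h : BraidMove M ω ω') (l : List B) :
    BraidMove M (ω ++ l) (ω' ++ l) := by
  obtain ⟨l₁, l₂, s, t, hst, rfl, rfl⟩ := h
  exact ⟨l₁, l₂ ++ l, s, t, hst, List.append_assoc .., List.append_assoc ..⟩

theorem BraidMove.nilBraidMove {ω ω' : List B} (h : BraidMove M ω ω') : NilBraidMove M ω ω' :=
  .inr h

theorem _root_.NilBraidMove.append_right {ω ω' : List B} (h : NilBraidMove M ω ω') (l : List B) :
    NilBraidMove M (ω ++ l) (ω' ++ l) := by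
  obtain ⟨l₁, l₂, s, rfl, rfl⟩ | hbraid := h
  · exact .inl ⟨l₁, l₂ ++ l, s, List.append_assoc .., List.append_assoc ..⟩
  · exact (BraidMove.append_right hbraid l).nilBraidMove

variable {W : Type*} [Group W] (cs : CoxeterSystem M W)

theorem exists_braidMove_of_isRightDescent {w : W} {i j : B} (hi : cs.IsRightDescent w i)
    (hj : cs.IsRightDescent w j) :
    ∃ ρ ρ', (cs.IsReduced (ρ ++ [i]) ∧ cs.wordProd (ρ ++ [i]) = w) ∧
      (cs.IsReduced (ρ' ++ [j]) ∧ cs.wordProd (ρ' ++ [j]) = w) ∧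
      BraidMove M (ρ ++ [i]) (ρ' ++ [j]) := by
  have hM := coxeterMatrix_ne_zero_of_isRightDescent cs hi hj
  obtain ⟨m, hm⟩ := Nat.exists_eq_add_one_of_ne_zero hM
  obtain ⟨ω, hω, hprod⟩ := exists_isReduced_append_alternatingWord cs hi hj (.inr le_rfl)
  have hprod' : cs.wordProd (ω ++ alternatingWord j i (M i j)) = w := by
    rw [wordProd_append, M.symmetric i j, cs.wordProd_braidWord_eq j i, ← wordProd_append, hprod]
  have hω' : cs.IsReduced (ω ++ alternatingWord j i (M i j)) := by
    rw [CoxeterSystem.IsReduced, hprod', ← hprod, hω.eq]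
    simp
  have hmove : BraidMove M (ω ++ alternatingWord j i (M i j)) (ω ++ alternatingWord i j (M i j)) :=
    ⟨ω, [], j, i, by rwa [M.symmetric], by simp [M.symmetric j i], by simp [M.symmetric j i]⟩
  simp only [hm, alternatingWord_succ, List.concat_eq_append, ← List.append_assoc]
    at hω hω' hprod hprod' hmove
  exact ⟨_, _, ⟨hω', hprod'⟩, ⟨hω, hprod⟩, hmove⟩

theorem reflTransGen_braidMove_of_isReduced {ω ω' : List B} (hω : cs.IsReduced ω)
    (hω' : cs.IsReduced ω') (h : cs.wordProd ω = cs.wordProd ω') :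
    ReflTransGen (BraidMove M) ω ω' := by
  induction hn : ω.length generalizing ω ω' with
  | zero =>
    have hn' : ω'.length = 0 := by rw [← hω'.eq, ← h, hω.eq, hn]
    rw [List.length_eq_zero_iff.mp hn, List.length_eq_zero_iff.mp hn']
  | succ n ih =>
    have same_last {ρ ρ' : List B} {i : B} (hρ : cs.IsReduced (ρ ++ [i]))
        (hρ' : cs.IsReduced (ρ' ++ [i])) (hprod : cs.wordProd (ρ ++ [i]) = cs.wordProd ω)
        (hprod' : cs.wordProd (ρ' ++ [i]) = cs.wordProd ω) :
        ReflTransGen (BraidMove M) (ρ ++ [i]) (ρ' ++ [i]) := by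
      refine ReflTransGen.lift (· ++ [i]) (fun _ _ hmove ↦ hmove.append_right [i]) _ _ <|
        ih (isReduced_of_isReduced_append_left cs hρ) (isReduced_of_isReduced_append_left cs hρ')
          ?_ ?_
      · simpa [wordProd_append] using hprod.trans hprod'.symm
      · simpa [hn, hω.eq, hprod] using hρ.eq.symm
    have hn' : ω'.length = n + 1 := by rw [← hω'.eq, ← h, hω.eq, hn]
    obtain ⟨ρ, i, rfl⟩ := List.eq_nil_or_concat' ω |>.resolve_left (by rintro rfl; simp at hn)
    obtain ⟨ρ', j, rfl⟩ := List.eq_nil_or_concat' ω' |>.resolve_left (by rintro rfl; simp at hn')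
    obtain ⟨τ, τ', ⟨hτ, hτprod⟩, ⟨hτ', hτprod'⟩, hmove⟩ := exists_braidMove_of_isRightDescent cs
      (isRightDescent_of_isReduced_append_singleton cs hω)
      (h ▸ isRightDescent_of_isReduced_append_singleton cs hω')
    exact ((same_last hω hτ rfl hτprod).tail hmove).trans (same_last hτ' hω' hτprod' h.symm)

theorem exists_reflTransGen_nilBraidMove_append_singleton {ω : List B} (hω : cs.IsReduced ω)
    (i : B) :
    ∃ ω', ReflTransGen (NilBraidMove M) (ω ++ [i]) ω' ∧ cs.IsReduced ω' ∧
      cs.wordProd ω' = cs.wordProd (ω ++ [i]) := by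
  by_cases hdesc : cs.IsRightDescent (cs.wordProd ω) i
  · obtain ⟨τ, hτ, hprod⟩ := exists_isReduced_append_singleton cs hdesc
    have hbraid : ReflTransGen (NilBraidMove M) ω (τ ++ [i]) :=
      ReflTransGen.mono (fun _ _ hmove ↦ hmove.nilBraidMove) _ _
        (reflTransGen_braidMove_of_isReduced cs hω hτ hprod.symm)
    have hnil : NilBraidMove M (τ ++ [i] ++ [i]) τ := .inl ⟨τ, [], i, by simp, by simp⟩
    refine ⟨τ, .tail (.lift (· ++ [i]) (fun _ _ hmove ↦ hmove.append_right [i]) _ _ hbraid) hnil,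
      isReduced_of_isReduced_append_left cs hτ, ?_⟩
    rw [wordProd_append, ← hprod, wordProd_append, wordProd_singleton,
      simple_mul_simple_cancel_right]
  · refine ⟨ω ++ [i], .refl, ?_, rfl⟩
    rw [CoxeterSystem.IsReduced, wordProd_append, wordProd_singleton,
      cs.not_isRightDescent_iff.mp hdesc, hω.eq, List.length_append, List.length_singleton]

end Moves

end Tits

/-- Tits' theorem (Theorem 3.3.1 in Björner–Brenti): in a Coxeter system `(W, S)`, any
expression (word in `S*`) for an element `w ∈ W` can be transformed into a reduced
expression for `w` by a sequence of nil moves and braid moves. -/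
theorem stmt_11 (B W : Type*) [Group W] (M : CoxeterMatrix B) (cs : CoxeterSystem M W)
    (ω : List B) :
    ∃ ω' : List B, Relation.ReflTransGen (NilBraidMove M) ω ω' ∧
      cs.IsReduced ω' ∧ cs.wordProd ω' = cs.wordProd ω := by
  induction ω using List.reverseRecOn with
  | nil => exact ⟨[], .refl, by simp [CoxeterSystem.IsReduced], rfl⟩
  | append_singleton ω i ih =>
    obtain ⟨ρ, hωρ, hρ, hprod⟩ := ih
    obtain ⟨τ, hρτ, hτ, hprod'⟩ := Tits.exists_reflTransGen_nilBraidMove_append_singleton cs hρ i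
    refine ⟨τ, .trans (.lift (· ++ [i]) (fun _ _ h ↦ h.append_right [i]) _ _ hωρ) hρτ, hτ, ?_⟩
    rw [hprod', cs.wordProd_append, hprod, ← cs.wordProd_append]
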